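/- arXiv:2103.01549 — 4 statements merged into one kernel-verified Lean document; each statement's English description precedes it below -/
import Mathlib

section
/- (Atiyah–Ward ansätz) Let U ⊆ ℂ⁵ be open and let φ : U → ℂ be twice continuously differentiable, nowhere zero, and satisfying the sub-Laplacian equation Δ_bφ := V₀₀′(V₁₁′φ) − V₁₀′(V₀₁′φ) = 0 on U. Write a_{AA′} = (V_{AA′}φ)/φ, and define the 2×2 matrix-valued functions Φ₀₀′ = [[½a₀₀′, a₀₁′],[0, −½a₀₀′]], Φ₁₀′ = [[½a₁₀′, a₁₁′],[0, −½a₁₀′]], Φ₀₁′ = [[−½a₀₁′, 0],[a₀₀′, ½a₀₁′]], Φ₁₁′ = [[−½a₁₁′, 0],[a₁₀′, ½a₁₁′]]. Then these satisfy the three ASD Yang–Mills equations on U: (i) V₀₀′Φ₁₀′ − V₁₀′Φ₀₀′ + [Φ₀₀′,Φ₁₀′] = 0; (ii) V₀₁′Φ₁₀′ + V₀₀′Φ₁₁′ − V₁₀′Φ₀₁′ − V₁₁′Φ₀₀′ + [Φ₀₀′,Φ₁₁′] + [Φ₀₁′,Φ₁₀′] = 0; (iii) V₀₁′Φ₁₁′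 − V₁₁′Φ₀₁′ + [Φ₀₁′,Φ₁₁′] = 0. Hence the connection form Φ = Σ Φ_{AA′}θ^{AA′} + Φ_Tθ is anti-self-dual. -/
/-- Complex partial derivative in the `i`-th coordinate direction on `ℂ⁵`. -/
noncomputable def pd (i : Fin 5) (f : (Fin 5 → ℂ) → ℂ) (y : Fin 5 → ℂ) : ℂ :=
  fderiv ℂ f y (Pi.single i 1)

/-- Coordinates on `ℂ⁵` are `(y₀₀′, y₁₀′, y₀₁′, y₁₁′, t)`, with indices `0,1,2,3,4`. -/
noncomputable def V00 (f : (Fin 5 → ℂ) → ℂ) (y : Fin 5 → ℂ) : ℂ := pd 0 f y - y 3 * pd 4 f y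
noncomputable def V01 (f : (Fin 5 → ℂ) → ℂ) (y : Fin 5 → ℂ) : ℂ := pd 2 f y + y 1 * pd 4 f y
noncomputable def V10 (f : (Fin 5 → ℂ) → ℂ) (y : Fin 5 → ℂ) : ℂ := pd 1 f y - y 2 * pd 4 f y
noncomputable def V11 (f : (Fin 5 → ℂ) → ℂ) (y : Fin 5 → ℂ) : ℂ := pd 3 f y + y 0 * pd 4 f y
noncomputable def T5 (f : (Fin 5 → ℂ) → ℂ) (y : Fin 5 → ℂ) : ℂ := pd 4 f y
/-- The vector fields acting entrywise on matrix-valued functions. -/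
noncomputable def V00M {n : ℕ} (Φ : (Fin 5 → ℂ) → Matrix (Fin n) (Fin n) ℂ)
    (y : Fin 5 → ℂ) : Matrix (Fin n) (Fin n) ℂ :=
  Matrix.of fun i j => V00 (fun p => Φ p i j) y

noncomputable def V01M {n : ℕ} (Φ : (Fin 5 → ℂ) → Matrix (Fin n) (Fin n) ℂ)
    (y : Fin 5 → ℂ) : Matrix (Fin n) (Fin n) ℂ :=
  Matrix.of fun i j => V01 (fun p => Φ p i j) y

noncomputable def V10M {n : ℕ} (Φ : (Fin 5 → ℂ) → Matrix (Fin n) (Fin n) ℂ)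
    (y : Fin 5 → ℂ) : Matrix (Fin n) (Fin n) ℂ :=
  Matrix.of fun i j => V10 (fun p => Φ p i j) y

noncomputable def V11M {n : ℕ} (Φ : (Fin 5 → ℂ) → Matrix (Fin n) (Fin n) ℂ)
    (y : Fin 5 → ℂ) : Matrix (Fin n) (Fin n) ℂ :=
  Matrix.of fun i j => V11 (fun p => Φ p i j) y

/-- `a_{AA′} = (V_{AA′}φ)/φ`. -/
noncomputable def a00 (φ : (Fin 5 → ℂ) → ℂ) (p : Fin 5 → ℂ) : ℂ := V00 φ p / φ p
noncomputable def a01 (φ : (Fin 5 → ℂ) → ℂ) (p : Fin 5 → ℂ) : ℂ := V01 φ p / φ p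
noncomputable def a10 (φ : (Fin 5 → ℂ) → ℂ) (p : Fin 5 → ℂ) : ℂ := V10 φ p / φ p
noncomputable def a11 (φ : (Fin 5 → ℂ) → ℂ) (p : Fin 5 → ℂ) : ℂ := V11 φ p / φ p

/-- The Atiyah–Ward connection components. -/
noncomputable def AW00 (φ : (Fin 5 → ℂ) → ℂ) (p : Fin 5 → ℂ) : Matrix (Fin 2) (Fin 2) ℂ :=
  !![(1 / 2) * a00 φ p, a01 φ p; 0, -((1 / 2) * a00 φ p)]
noncomputable def AW10 (φ : (Fin 5 → ℂ) → ℂ) (p : Fin 5 → ℂ) : Matrix (Fin 2) (Fin 2) ℂ :=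
  !![(1 / 2) * a10 φ p, a11 φ p; 0, -((1 / 2) * a10 φ p)]
noncomputable def AW01 (φ : (Fin 5 → ℂ) → ℂ) (p : Fin 5 → ℂ) : Matrix (Fin 2) (Fin 2) ℂ :=
  !![-((1 / 2) * a01 φ p), 0; a00 φ p, (1 / 2) * a01 φ p]
noncomputable def AW11 (φ : (Fin 5 → ℂ) → ℂ) (p : Fin 5 → ℂ) : Matrix (Fin 2) (Fin 2) ℂ :=
  !![-((1 / 2) * a11 φ p), 0; a10 φ p, (1 / 2) * a11 φ p]

/-!
The potential is built from the logarithmic derivatives `a_X = (Xφ)/φ`, and the mixed partials of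
`log φ` commute, so `X a_Y - Y a_X = a_{[X, Y]}`. The three commutators of potentials all reduce
to the single function `δ = a₀₀′ a₁₁′ - a₀₁′ a₁₀′`. The Heisenberg relations `[V₀₀′, V₁₀′] = 0`,
`[V₀₁′, V₁₁′] = 0` and `[V₀₀′, V₁₁′] = [V₁₀′, V₀₁′]` make the terms without `δ` cancel, and the
sub-Laplacian equation, rewritten as `V₀₀′ a₁₁′ - V₁₀′ a₀₁′ = -δ`, cancels the rest. The ansätz
therefore holds for any four vector fields with these brackets, for instance also for the flat
commuting frame.
-/

open VectorField (lieBracket)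

section DerivAlong

variable {𝕜 E F : Type*} [NontriviallyNormedField 𝕜] [NormedAddCommGroup E] [NormedSpace 𝕜 E]
  [NormedAddCommGroup F] [NormedSpace 𝕜 F]

variable (𝕜) in
/-- The derivative `X f` of a function `f` along a vector field `X`. -/
noncomputable def derivAlong (X : E → E) (f : E → F) (p : E) : F :=
  fderiv 𝕜 f p (X p)

/-- The logarithmic derivative `(X φ) / φ` of a scalar function along a vector field. -/
noncomputable def logDerivAlong (X : E → E) (φ : E → 𝕜) (p : E) : 𝕜 :=
  derivAlong 𝕜 X φ p / φ p

lemma derivAlong_const_mul (X : E → E) (c : 𝕜) (f : E → 𝕜) (p : E) :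
    derivAlong 𝕜 X (fun q => c * f q) p = c * derivAlong 𝕜 X f p := by
  have h : fderiv 𝕜 (fun q => c * f q) p = c • fderiv 𝕜 f p :=
    congrFun (fderiv_const_smul_field (f := f) c) p
  simp only [derivAlong, h, smul_apply, smul_eq_mul]

lemma derivAlong_neg (X : E → E) (f : E → F) (p : E) :
    derivAlong 𝕜 X (fun q => -f q) p = -derivAlong 𝕜 X f p := by
  simp only [derivAlong, fderiv_fun_neg, neg_apply]

lemma derivAlong_const (X : E → E) (c : F) (p : E) :
    derivAlong 𝕜 X (fun _ => c) p = 0 := by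
  simp only [derivAlong, fderiv_fun_const, Pi.zero_apply, zero_apply]

lemma derivAlong_div (X : E → E) {f g : E → 𝕜} {p : E} (hf : DifferentiableAt 𝕜 f p)
    (hg : DifferentiableAt 𝕜 g p) (h0 : g p ≠ 0) :
    derivAlong 𝕜 X (fun q => f q / g q) p =
      derivAlong 𝕜 X f p / g p - f p / g p * (derivAlong 𝕜 X g p / g p) := by
  have h : HasFDerivAt (fun q => f q / g q)
      (f p • (-(g p ^ 2)⁻¹ • fderiv 𝕜 g p) + (g p)⁻¹ • fderiv 𝕜 f p) p := by
    simp only [div_eq_mul_inv]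
    exact hf.hasFDerivAt.mul ((hasDerivAt_inv h0).comp_hasFDerivAt p hg.hasFDerivAt)
  simp only [derivAlong, h.fderiv, add_apply, smul_apply, smul_eq_mul]
  field_simp
  ring

variable {X Y : E → E} {p : E}

lemma differentiableAt_derivAlong {f : E → F} (hX : DifferentiableAt 𝕜 X p)
    (hf : ContDiffAt 𝕜 2 f p) : DifferentiableAt 𝕜 (derivAlong 𝕜 X f) p :=
  ((hf.fderiv_right (m := 1) le_rfl).differentiableAt one_ne_zero).clm_apply hX

lemma derivAlong_derivAlong {f : E → F} (hY : DifferentiableAt 𝕜 Y p) (hf : ContDiffAt 𝕜 2 f p) :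
    derivAlong 𝕜 X (derivAlong 𝕜 Y f) p =
      fderiv 𝕜 (fderiv 𝕜 f) p (X p) (Y p) + fderiv 𝕜 f p (fderiv 𝕜 Y p (X p)) := by
  have h := fderiv_clm_apply ((hf.fderiv_right (m := 1) le_rfl).differentiableAt one_ne_zero) hY
  rw [derivAlong, show derivAlong 𝕜 Y f = fun q => fderiv 𝕜 f q (Y q) from rfl, h]
  simp only [add_apply, ContinuousLinearMap.comp_apply, ContinuousLinearMap.flip_apply]
  exact add_comm _ _

lemma derivAlong_commutator {f : E → F} (hX : DifferentiableAt 𝕜 X p)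
    (hY : DifferentiableAt 𝕜 Y p) (hf : ContDiffAt 𝕜 (minSmoothness 𝕜 2) f p) :
    derivAlong 𝕜 X (derivAlong 𝕜 Y f) p - derivAlong 𝕜 Y (derivAlong 𝕜 X f) p =
      derivAlong 𝕜 (lieBracket 𝕜 X Y) f p := by
  have hf₂ : ContDiffAt 𝕜 2 f p := hf.of_le le_minSmoothness
  rw [derivAlong_derivAlong hY hf₂, derivAlong_derivAlong hX hf₂,
    (hf.isSymmSndFDerivAt le_rfl).eq (X p) (Y p), add_sub_add_left_eq_sub, ← map_sub]
  rfl

lemma derivAlong_logDerivAlong {φ : E → 𝕜} (hY : DifferentiableAt 𝕜 Y p)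
    (hφ : ContDiffAt 𝕜 2 φ p) (h0 : φ p ≠ 0) :
    derivAlong 𝕜 X (logDerivAlong Y φ) p =
      derivAlong 𝕜 X (derivAlong 𝕜 Y φ) p / φ p - logDerivAlong Y φ p * logDerivAlong X φ p :=
  derivAlong_div X (differentiableAt_derivAlong hY hφ) (hφ.differentiableAt two_ne_zero) h0

lemma logDerivAlong_commutator {φ : E → 𝕜} (hX : DifferentiableAt 𝕜 X p)
    (hY : DifferentiableAt 𝕜 Y p) (hφ : ContDiffAt 𝕜 (minSmoothness 𝕜 2) φ p) (h0 : φ p ≠ 0) :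
    derivAlong 𝕜 X (logDerivAlong Y φ) p - derivAlong 𝕜 Y (logDerivAlong X φ) p =
      logDerivAlong (lieBracket 𝕜 X Y) φ p := by
  have hφ₂ : ContDiffAt 𝕜 2 φ p := hφ.of_le le_minSmoothness
  rw [derivAlong_logDerivAlong hY hφ₂ h0, derivAlong_logDerivAlong hX hφ₂ h0,
    logDerivAlong.eq_def (lieBracket 𝕜 X Y), ← derivAlong_commutator hX hY hφ]
  ring

lemma logDerivAlong_congr {φ : E → 𝕜} (h : X p = Y p) :
    logDerivAlong X φ p = logDerivAlong Y φ p := by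
  rw [logDerivAlong, logDerivAlong, derivAlong, derivAlong, h]

lemma derivAlong_logDerivAlong_comm {φ : E → 𝕜} (hX : DifferentiableAt 𝕜 X p)
    (hY : DifferentiableAt 𝕜 Y p) (hφ : ContDiffAt 𝕜 (minSmoothness 𝕜 2) φ p) (h0 : φ p ≠ 0)
    (hXY : lieBracket 𝕜 X Y p = 0) :
    derivAlong 𝕜 X (logDerivAlong Y φ) p = derivAlong 𝕜 Y (logDerivAlong X φ) p := by
  rw [← sub_eq_zero, logDerivAlong_commutator hX hY hφ h0, logDerivAlong, derivAlong, hXY,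
    map_zero, zero_div]

lemma derivAlong_logDerivAlong_sub_of_sub_eq_zero {φ : E → 𝕜} {Z W : E → E}
    (hY : DifferentiableAt 𝕜 Y p) (hW : DifferentiableAt 𝕜 W p) (hφ : ContDiffAt 𝕜 2 φ p)
    (h0 : φ p ≠ 0)
    (h : derivAlong 𝕜 X (derivAlong 𝕜 Y φ) p - derivAlong 𝕜 Z (derivAlong 𝕜 W φ) p = 0) :
    derivAlong 𝕜 X (logDerivAlong Y φ) p - derivAlong 𝕜 Z (logDerivAlong W φ) p =
      logDerivAlong W φ p * logDerivAlong Z φ p - logDerivAlong X φ p * logDerivAlong Y φ p := by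
  rw [derivAlong_logDerivAlong hY hφ h0, derivAlong_logDerivAlong hW hφ h0]
  linear_combination h / φ p

end DerivAlong

section Potential

variable {K : Type*} [Field K]

/-- The shape `(a/2, b; 0, -a/2)` of the components `Φ_{A0′}` of the Atiyah–Ward potential. -/
def upperPotential (a b : K) : Matrix (Fin 2) (Fin 2) K :=
  !![(1 / 2) * a, b; 0, -((1 / 2) * a)]

/-- The shape `(-b/2, 0; a, b/2)` of the components `Φ_{A1′}` of the Atiyah–Ward potential. -/
def lowerPotential (a b : K) : Matrix (Fin 2) (Fin 2) K :=
  !![-((1 / 2) * b), 0; a, (1 / 2) * b]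

lemma upperPotential_sub (a b c d : K) :
    upperPotential a b - upperPotential c d = upperPotential (a - c) (b - d) := by
  simp only [upperPotential, ← Matrix.ext_iff, Fin.forall_fin_two, Matrix.sub_apply,
    Matrix.of_apply, Matrix.cons_val', Matrix.cons_val_zero, Matrix.cons_val_one,
    Matrix.cons_val_fin_one, sub_zero, and_true, true_and]
  constructor <;> ring

lemma lowerPotential_sub (a b c d : K) :
    lowerPotential a b - lowerPotential c d = lowerPotential (a - c) (b - d) := by
  simp only [lowerPotential, ← Matrix.ext_iff, Fin.forall_fin_two, Matrix.sub_apply,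
    Matrix.of_apply, Matrix.cons_val', Matrix.cons_val_zero, Matrix.cons_val_one,
    Matrix.cons_val_fin_one, sub_zero, and_true, true_and]
  constructor <;> ring

variable [NeZero (2 : K)]

lemma upperPotential_lie_upperPotential (a b c d : K) :
    ⁅upperPotential a b, upperPotential c d⁆ = -upperPotential 0 (b * c - a * d) := by
  simp only [upperPotential, Ring.lie_def, Matrix.mul_fin_two, ← Matrix.ext_iff,
    Fin.forall_fin_two, Matrix.sub_apply, Matrix.neg_apply, Matrix.of_apply, Matrix.cons_val',
    Matrix.cons_val_zero, Matrix.cons_val_one, Matrix.cons_val_fin_one]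
  refine ⟨⟨?_, ?_⟩, ?_, ?_⟩ <;> field

lemma lowerPotential_lie_lowerPotential (a b c d : K) :
    ⁅lowerPotential a b, lowerPotential c d⁆ = -lowerPotential (a * d - b * c) 0 := by
  simp only [lowerPotential, Ring.lie_def, Matrix.mul_fin_two, ← Matrix.ext_iff,
    Fin.forall_fin_two, Matrix.sub_apply, Matrix.neg_apply, Matrix.of_apply, Matrix.cons_val',
    Matrix.cons_val_zero, Matrix.cons_val_one, Matrix.cons_val_fin_one]
  refine ⟨⟨?_, ?_⟩, ?_, ?_⟩ <;> field

lemma upperPotential_lie_lowerPotential_add (a b c d : K) :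
    ⁅upperPotential a b, lowerPotential c d⁆ + ⁅lowerPotential a b, upperPotential c d⁆ =
      -(upperPotential (a * d - b * c) 0 + lowerPotential 0 (b * c - a * d)) := by
  simp only [upperPotential, lowerPotential, Ring.lie_def, Matrix.mul_fin_two, ← Matrix.ext_iff,
    Fin.forall_fin_two, Matrix.add_apply, Matrix.sub_apply, Matrix.neg_apply, Matrix.of_apply,
    Matrix.cons_val', Matrix.cons_val_zero, Matrix.cons_val_one, Matrix.cons_val_fin_one]
  refine ⟨⟨?_, ?_⟩, ?_, ?_⟩ <;> field

end Potential

section AtiyahWard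

variable {𝕜 E : Type*} [NontriviallyNormedField 𝕜] [NormedAddCommGroup E] [NormedSpace 𝕜 E]

/-- The derivative along a vector field acting entrywise on matrix-valued functions. -/
noncomputable def entrywiseDerivAlong {m n : Type*} (X : E → E) (Φ : E → Matrix m n 𝕜) (p : E) :
    Matrix m n 𝕜 :=
  Matrix.of fun i j => derivAlong 𝕜 X (fun q => Φ q i j) p

lemma entrywiseDerivAlong_upperPotential (X : E → E) (a b : E → 𝕜) (p : E) :
    entrywiseDerivAlong X (fun q => upperPotential (a q) (b q)) p =
      upperPotential (derivAlong 𝕜 X a p) (derivAlong 𝕜 X b p) := by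
  ext i j
  fin_cases i <;> fin_cases j <;>
    simp [entrywiseDerivAlong, upperPotential, derivAlong_neg, derivAlong_const_mul,
      derivAlong_const]

lemma entrywiseDerivAlong_lowerPotential (X : E → E) (a b : E → 𝕜) (p : E) :
    entrywiseDerivAlong X (fun q => lowerPotential (a q) (b q)) p =
      lowerPotential (derivAlong 𝕜 X a p) (derivAlong 𝕜 X b p) := by
  ext i j
  fin_cases i <;> fin_cases j <;>
    simp [entrywiseDerivAlong, lowerPotential, derivAlong_neg, derivAlong_const_mul,
      derivAlong_const]

/-- The Atiyah–Ward potential `Φ_{AA′}` generated by a scalar function `φ` with respect to a frame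
of vector fields `X A A'`, which stands for the `V_{AA′}` of the ansätz. -/
noncomputable def atiyahWardPotential (X : Fin 2 → Fin 2 → E → E) (φ : E → 𝕜) (A A' : Fin 2)
    (p : E) : Matrix (Fin 2) (Fin 2) 𝕜 :=
  match A' with
  | 0 => upperPotential (logDerivAlong (X A 0) φ p) (logDerivAlong (X A 1) φ p)
  | 1 => lowerPotential (logDerivAlong (X A 0) φ p) (logDerivAlong (X A 1) φ p)

lemma entrywiseDerivAlong_atiyahWardPotential_zero (X : Fin 2 → Fin 2 → E → E) (φ : E → 𝕜)
    (Y : E → E) (A : Fin 2) (p : E) :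
    entrywiseDerivAlong Y (atiyahWardPotential X φ A 0) p =
      upperPotential (derivAlong 𝕜 Y (logDerivAlong (X A 0) φ) p)
        (derivAlong 𝕜 Y (logDerivAlong (X A 1) φ) p) :=
  entrywiseDerivAlong_upperPotential Y _ _ p

lemma entrywiseDerivAlong_atiyahWardPotential_one (X : Fin 2 → Fin 2 → E → E) (φ : E → 𝕜)
    (Y : E → E) (A : Fin 2) (p : E) :
    entrywiseDerivAlong Y (atiyahWardPotential X φ A 1) p =
      lowerPotential (derivAlong 𝕜 Y (logDerivAlong (X A 0) φ) p)
        (derivAlong 𝕜 Y (logDerivAlong (X A 1) φ) p) :=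
  entrywiseDerivAlong_lowerPotential Y _ _ p

theorem atiyah_ward_ansatz_general [NeZero (2 : 𝕜)] {X : Fin 2 → Fin 2 → E → E} {φ : E → 𝕜}
    {p : E} (hX : ∀ A A', DifferentiableAt 𝕜 (X A A') p)
    (h₀ : lieBracket 𝕜 (X 0 0) (X 1 0) p = 0) (h₁ : lieBracket 𝕜 (X 0 1) (X 1 1) p = 0)
    (h₀₁ : lieBracket 𝕜 (X 0 0) (X 1 1) p = lieBracket 𝕜 (X 1 0) (X 0 1) p)
    (hφ : ContDiffAt 𝕜 (minSmoothness 𝕜 2) φ p) (hne : φ p ≠ 0)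
    (hlap : derivAlong 𝕜 (X 0 0) (derivAlong 𝕜 (X 1 1) φ) p
      - derivAlong 𝕜 (X 1 0) (derivAlong 𝕜 (X 0 1) φ) p = 0) :
    let Φ := atiyahWardPotential X φ
    let D A A' := entrywiseDerivAlong (𝕜 := 𝕜) (m := Fin 2) (n := Fin 2) (X A A')
    D 0 0 (Φ 1 0) p - D 1 0 (Φ 0 0) p + ⁅Φ 0 0 p, Φ 1 0 p⁆ = 0 ∧
    D 0 1 (Φ 1 0) p + D 0 0 (Φ 1 1) p - D 1 0 (Φ 0 1) p - D 1 1 (Φ 0 0) p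
      + ⁅Φ 0 0 p, Φ 1 1 p⁆ + ⁅Φ 0 1 p, Φ 1 0 p⁆ = 0 ∧
    D 0 1 (Φ 1 1) p - D 1 1 (Φ 0 1) p + ⁅Φ 0 1 p, Φ 1 1 p⁆ = 0 := by
  intro Φ D
  have hφ₂ : ContDiffAt 𝕜 2 φ p := hφ.of_le le_minSmoothness
  have comm₀ := derivAlong_logDerivAlong_comm (hX 0 0) (hX 1 0) hφ hne h₀
  have comm₁ := derivAlong_logDerivAlong_comm (hX 0 1) (hX 1 1) hφ hne h₁
  have lap := derivAlong_logDerivAlong_sub_of_sub_eq_zero (hX 1 1) (hX 0 1) hφ₂ hne hlap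
  have lap' : derivAlong 𝕜 (X 0 1) (logDerivAlong (X 1 0) φ) p -
      derivAlong 𝕜 (X 1 1) (logDerivAlong (X 0 0) φ) p =
        logDerivAlong (X 0 0) φ p * logDerivAlong (X 1 1) φ p -
          logDerivAlong (X 0 1) φ p * logDerivAlong (X 1 0) φ p := by
    linear_combination logDerivAlong_commutator (hX 0 0) (hX 1 1) hφ hne
      - logDerivAlong_commutator (hX 1 0) (hX 0 1) hφ hne + logDerivAlong_congr (φ := φ) h₀₁ - lap
  simp only [Φ, D, entrywiseDerivAlong_atiyahWardPotential_zero,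
    entrywiseDerivAlong_atiyahWardPotential_one, atiyahWardPotential]
  refine ⟨?_, ?_, ?_⟩
  · rw [upperPotential_sub, upperPotential_lie_upperPotential, comm₀, lap, sub_self,
      add_neg_cancel]
  · rw [add_assoc, upperPotential_lie_lowerPotential_add, add_neg_eq_zero, sub_right_comm,
      add_sub_right_comm, add_sub_assoc, upperPotential_sub, lowerPotential_sub, comm₀, comm₁,
      lap, lap', sub_self, sub_self]
  · rw [lowerPotential_sub, lowerPotential_lie_lowerPotential, comm₁, lap', sub_self,
      add_neg_cancel]

end AtiyahWard

section Heisenberg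

variable {𝕜 E F : Type*} [NontriviallyNormedField 𝕜] [NormedAddCommGroup E] [NormedSpace 𝕜 E]
  [NormedAddCommGroup F] [NormedSpace 𝕜 F]

/-- The vector field `p ↦ v + ω(p, v) T`. When `T` lies in the radical of the alternating form `ω`,
these are the left-invariant fields of the Heisenberg group law `p * q = p + q + ω(p, q) T`. -/
def heisenbergField (ω : E →L[𝕜] E →L[𝕜] 𝕜) (T v p : E) : E :=
  v + ω p v • T

variable (ω : E →L[𝕜] E →L[𝕜] 𝕜) (T v w p : E)

lemma hasFDerivAt_heisenbergField :
    HasFDerivAt (heisenbergField ω T v) ((ω.flip v).smulRight T) p :=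
  ((ω.flip v).smulRight T).hasFDerivAt.const_add v

lemma derivAlong_heisenbergField (f : E → F) :
    derivAlong 𝕜 (heisenbergField ω T v) f p = fderiv 𝕜 f p v + ω p v • fderiv 𝕜 f p T := by
  simp only [derivAlong, heisenbergField, map_add, map_smul]

lemma lieBracket_heisenbergField (hT : ω T = 0) :
    lieBracket 𝕜 (heisenbergField ω T v) (heisenbergField ω T w) p = (ω v w - ω w v) • T := by
  simp [lieBracket, (hasFDerivAt_heisenbergField ω T _ p).fderiv, heisenbergField, hT, sub_smul]

/-- The alternating form `dy₀₀′ ∧ dy₁₁′ + dy₁₀′ ∧ dy₀₁′` on `ℂ⁵`. -/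
noncomputable def heisenbergForm : (Fin 5 → ℂ) →L[ℂ] (Fin 5 → ℂ) →L[ℂ] ℂ :=
  let x (i : Fin 5) : (Fin 5 → ℂ) →L[ℂ] ℂ := ContinuousLinearMap.proj i
  (x 0).smulRight (x 3) - (x 3).smulRight (x 0) + ((x 1).smulRight (x 2) - (x 2).smulRight (x 1))

lemma heisenbergForm_apply (p v : Fin 5 → ℂ) :
    heisenbergForm p v = p 0 * v 3 - p 3 * v 0 + (p 1 * v 2 - p 2 * v 1) := rfl

/-- The frame `V_{AA′}`; the matrix lists the positions of the coordinates `y_{AA′}` in `ℂ⁵`. -/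
noncomputable def heisenbergFrame (A A' : Fin 2) : (Fin 5 → ℂ) → Fin 5 → ℂ :=
  heisenbergField heisenbergForm (Pi.single 4 1) (Pi.single (!![0, 2; 1, 3] A A') 1)

lemma V00_eq_derivAlong : V00 = derivAlong ℂ (heisenbergFrame 0 0) := by
  ext f p
  simp [V00, pd, heisenbergFrame, derivAlong_heisenbergField, heisenbergForm_apply, sub_eq_add_neg]

lemma V01_eq_derivAlong : V01 = derivAlong ℂ (heisenbergFrame 0 1) := by
  ext f p
  simp [V01, pd, heisenbergFrame, derivAlong_heisenbergField, heisenbergForm_apply]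

lemma V10_eq_derivAlong : V10 = derivAlong ℂ (heisenbergFrame 1 0) := by
  ext f p
  simp [V10, pd, heisenbergFrame, derivAlong_heisenbergField, heisenbergForm_apply, sub_eq_add_neg]

lemma V11_eq_derivAlong : V11 = derivAlong ℂ (heisenbergFrame 1 1) := by
  ext f p
  simp [V11, pd, heisenbergFrame, derivAlong_heisenbergField, heisenbergForm_apply]

lemma V00M_eq_entrywiseDerivAlong {n : ℕ} (Φ : (Fin 5 → ℂ) → Matrix (Fin n) (Fin n) ℂ) :
    V00M Φ = entrywiseDerivAlong (heisenbergFrame 0 0) Φ := by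
  simp only [funext_iff, V00M, V00_eq_derivAlong]
  exact fun _ => rfl

lemma V01M_eq_entrywiseDerivAlong {n : ℕ} (Φ : (Fin 5 → ℂ) → Matrix (Fin n) (Fin n) ℂ) :
    V01M Φ = entrywiseDerivAlong (heisenbergFrame 0 1) Φ := by
  simp only [funext_iff, V01M, V01_eq_derivAlong]
  exact fun _ => rfl

lemma V10M_eq_entrywiseDerivAlong {n : ℕ} (Φ : (Fin 5 → ℂ) → Matrix (Fin n) (Fin n) ℂ) :
    V10M Φ = entrywiseDerivAlong (heisenbergFrame 1 0) Φ := by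
  simp only [funext_iff, V10M, V10_eq_derivAlong]
  exact fun _ => rfl

lemma V11M_eq_entrywiseDerivAlong {n : ℕ} (Φ : (Fin 5 → ℂ) → Matrix (Fin n) (Fin n) ℂ) :
    V11M Φ = entrywiseDerivAlong (heisenbergFrame 1 1) Φ := by
  simp only [funext_iff, V11M, V11_eq_derivAlong]
  exact fun _ => rfl

lemma AW00_eq_atiyahWardPotential (φ : (Fin 5 → ℂ) → ℂ) :
    AW00 φ = atiyahWardPotential heisenbergFrame φ 0 0 := by
  simp only [funext_iff, AW00, a00, a01, V00_eq_derivAlong, V01_eq_derivAlong]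
  exact fun _ => rfl

lemma AW01_eq_atiyahWardPotential (φ : (Fin 5 → ℂ) → ℂ) :
    AW01 φ = atiyahWardPotential heisenbergFrame φ 0 1 := by
  simp only [funext_iff, AW01, a00, a01, V00_eq_derivAlong, V01_eq_derivAlong]
  exact fun _ => rfl

lemma AW10_eq_atiyahWardPotential (φ : (Fin 5 → ℂ) → ℂ) :
    AW10 φ = atiyahWardPotential heisenbergFrame φ 1 0 := by
  simp only [funext_iff, AW10, a10, a11, V10_eq_derivAlong, V11_eq_derivAlong]
  exact fun _ => rfl

lemma AW11_eq_atiyahWardPotential (φ : (Fin 5 → ℂ) → ℂ) :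
    AW11 φ = atiyahWardPotential heisenbergFrame φ 1 1 := by
  simp only [funext_iff, AW11, a10, a11, V10_eq_derivAlong, V11_eq_derivAlong]
  exact fun _ => rfl

lemma differentiableAt_heisenbergFrame (A A' : Fin 2) (p : Fin 5 → ℂ) :
    DifferentiableAt ℂ (heisenbergFrame A A') p :=
  (hasFDerivAt_heisenbergField _ _ _ p).differentiableAt

lemma lieBracket_heisenbergFrame (A A' B B' : Fin 2) (p : Fin 5 → ℂ) :
    lieBracket ℂ (heisenbergFrame A A') (heisenbergFrame B B') p =
      (2 * !![0, 1; 1, 0] A B * !![0, 1; -1, 0] A' B' : ℂ) • Pi.single 4 1 := by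
  have hT : heisenbergForm (Pi.single 4 1) = 0 := by
    ext
    simp [heisenbergForm_apply]
  rw [heisenbergFrame, heisenbergFrame, lieBracket_heisenbergField _ _ _ _ _ hT]
  congr 1
  fin_cases A <;> fin_cases A' <;> fin_cases B <;> fin_cases B' <;>
    norm_num [heisenbergForm_apply, Pi.single_apply, Fin.ext_iff]

end Heisenberg

/-- Atiyah–Ward ansätz: if `φ` is `C²`, nowhere zero and satisfies the sub-Laplacian
equation `Δ_bφ = V₀₀′V₁₁′φ − V₁₀′V₀₁′φ = 0` on an open set `U`, then the associated
`2×2` connection components satisfy the three ASD Yang–Mills equations on `U`. -/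
theorem atiyah_ward_ansatz (U : Set (Fin 5 → ℂ)) (hU : IsOpen U)
    (φ : (Fin 5 → ℂ) → ℂ)
    (hφ : ∀ y ∈ U, ContDiffAt ℂ 2 φ y)
    (hne : ∀ y ∈ U, φ y ≠ 0)
    (hlap : ∀ y ∈ U, V00 (V11 φ) y - V10 (V01 φ) y = 0) :
    (∀ y ∈ U, V00M (AW10 φ) y - V10M (AW00 φ) y
        + (AW00 φ y * AW10 φ y - AW10 φ y * AW00 φ y) = 0) ∧
    (∀ y ∈ U, V01M (AW10 φ) y + V00M (AW11 φ) y - V10M (AW01 φ) y - V11M (AW00 φ) y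
        + (AW00 φ y * AW11 φ y - AW11 φ y * AW00 φ y)
        + (AW01 φ y * AW10 φ y - AW10 φ y * AW01 φ y) = 0) ∧
    (∀ y ∈ U, V01M (AW11 φ) y - V11M (AW01 φ) y
        + (AW01 φ y * AW11 φ y - AW11 φ y * AW01 φ y) = 0) := by
  have h (y) (hy : y ∈ U) := atiyah_ward_ansatz_general (differentiableAt_heisenbergFrame · · y)
    (by simp [lieBracket_heisenbergFrame]) (by simp [lieBracket_heisenbergFrame])
    (by simp [lieBracket_heisenbergFrame]) (by simpa using hφ y hy) (hne y hy)
    (by simpa only [V00_eq_derivAlong, V01_eq_derivAlong, V10_eq_derivAlong, V11_eq_derivAlong]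
      using hlap y hy)
  simp only [← AW00_eq_atiyahWardPotential, ← AW01_eq_atiyahWardPotential,
    ← AW10_eq_atiyahWardPotential, ← AW11_eq_atiyahWardPotential,
    ← V00M_eq_entrywiseDerivAlong, ← V01M_eq_entrywiseDerivAlong,
    ← V10M_eq_entrywiseDerivAlong, ← V11M_eq_entrywiseDerivAlong, Ring.lie_def] at h
  exact ⟨fun y hy => (h y hy).1, fun y hy => (h y hy).2.1, fun y hy => (h y hy).2.2⟩
end

section
/- The function φ(y, t) = 1/((y₀₀′y₁₁′ − y₁₀′y₀₁′)² − t²) satisfies the sub-Laplacian equation Δ_bφ = V₀₀′(V₁₁′φ) − V₁₀′(V₀₁′φ) = 0 on the open set {(y, t) ∈ ℂ⁵ : (y₀₀′y₁₁′ − y₁₀′y₀₁′)² ≠ t²}. -/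
/-- `φ(y,t) = 1/(‖y‖⁴ − t²)` with `‖y‖² = y₀₀′y₁₁′ − y₁₀′y₀₁′`. -/
noncomputable def phiH (p : Fin 5 → ℂ) : ℂ :=
  1 / ((p 0 * p 3 - p 1 * p 2) ^ 2 - (p 4) ^ 2)

/-!
Put `u = ‖y‖² - t` and `w = ‖y‖² + t`. The fields `V₁₁′` and `V₁₀′` annihilate `u`, while `V₀₀′` and
`V₀₁′` annihilate `w`, so on functions of `(u, w)` the sub-Laplacian reduces to the
Euler–Poisson–Darboux operator `2 (∂_u + ∂_w + (u + w) ∂_u ∂_w)`, and `φ = u⁻¹ w⁻¹` is one of its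
solutions.
-/

open Filter Topology

section FieldDeriv

variable {𝕜 E : Type*} [NontriviallyNormedField 𝕜] [NormedAddCommGroup E] [NormedSpace 𝕜 E]

/-- The derivative of a scalar function along a vector field, i.e. the field acting as a first-order
differential operator; it inherits the value `0` of `fderiv` where `f` is not differentiable. -/
noncomputable def fieldDeriv (X : E → E) (f : E → 𝕜) (p : E) : 𝕜 :=
  fderiv 𝕜 f p (X p)

variable {X Y : E → E} {f g u w : E → 𝕜} {a b : 𝕜 → 𝕜} {p : E}

lemma fieldDeriv_congr (h : f =ᶠ[𝓝 p] g) :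
    fieldDeriv X f p = fieldDeriv X g p := by
  rw [fieldDeriv, fieldDeriv, h.fderiv_eq]

lemma fieldDeriv_mul (hf : DifferentiableAt 𝕜 f p) (hg : DifferentiableAt 𝕜 g p) :
    fieldDeriv X (fun q => f q * g q) p = f p * fieldDeriv X g p + g p * fieldDeriv X f p := by
  simp [fieldDeriv, fderiv_fun_mul hf hg]

lemma fieldDeriv_comp (ha : DifferentiableAt 𝕜 a (u p)) (hu : DifferentiableAt 𝕜 u p) :
    fieldDeriv X (fun q => a (u q)) p = deriv a (u p) * fieldDeriv X u p := by
  have h : HasFDerivAt (fun q => a (u q)) (deriv a (u p) • fderiv 𝕜 u p) p :=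
    ha.hasDerivAt.comp_hasFDerivAt p hu.hasFDerivAt
  simp [fieldDeriv, h.fderiv]

lemma fieldDeriv_comp_mul_comp (ha : DifferentiableAt 𝕜 a (u p)) (hb : DifferentiableAt 𝕜 b (w p))
    (hu : DifferentiableAt 𝕜 u p) (hw : DifferentiableAt 𝕜 w p) :
    fieldDeriv X (fun q => a (u q) * b (w q)) p =
      a (u p) * (deriv b (w p) * fieldDeriv X w p) +
        b (w p) * (deriv a (u p) * fieldDeriv X u p) := by
  rw [fieldDeriv_mul (ha.fun_comp' p hu) (hb.fun_comp' p hw), fieldDeriv_comp ha hu,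
    fieldDeriv_comp hb hw]

lemma fieldDeriv_fieldDeriv_comp_mul_comp
    (ha : ∀ᶠ z in 𝓝 (u p), DifferentiableAt 𝕜 a z) (hb : ∀ᶠ z in 𝓝 (w p), DifferentiableAt 𝕜 b z)
    (hb' : DifferentiableAt 𝕜 (deriv b) (w p))
    (hu : ∀ᶠ q in 𝓝 p, DifferentiableAt 𝕜 u q) (hw : ∀ᶠ q in 𝓝 p, DifferentiableAt 𝕜 w q)
    (hYw : DifferentiableAt 𝕜 (fieldDeriv Y w) p)
    (hYu_zero : ∀ᶠ q in 𝓝 p, fieldDeriv Y u q = 0) (hXw_zero : fieldDeriv X w p = 0) :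
    fieldDeriv X (fieldDeriv Y fun q => a (u q) * b (w q)) p =
      deriv a (u p) * deriv b (w p) * (fieldDeriv X u p * fieldDeriv Y w p) +
        a (u p) * deriv b (w p) * fieldDeriv X (fieldDeriv Y w) p := by
  have hup := hu.self_of_nhds
  have hwp := hw.self_of_nhds
  have inner_eq : (fieldDeriv Y fun q => a (u q) * b (w q)) =ᶠ[𝓝 p]
      fun q => a (u q) * deriv b (w q) * fieldDeriv Y w q := by
    filter_upwards [hup.continuousAt.eventually ha, hwp.continuousAt.eventually hb, hu, hw,
      hYu_zero] with q haq hbq huq hwq hYuq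
    rw [fieldDeriv_comp_mul_comp haq hbq huq hwq, hYuq]
    ring
  have hap := ha.self_of_nhds
  rw [fieldDeriv_congr inner_eq,
    fieldDeriv_mul ((hap.fun_comp' p hup).fun_mul (hb'.fun_comp' p hwp)) hYw,
    fieldDeriv_comp_mul_comp hap hb' hup hwp, hXw_zero]
  ring

end FieldDeriv

section HorizontalField

/-- The vector field `∂ᵢ + c ∂ₜ` on `ℂ⁵`; each of the four left-invariant fields has this form. -/
noncomputable def horizontalField (i : Fin 5) (c : (Fin 5 → ℂ) → ℂ) (y : Fin 5 → ℂ) : Fin 5 → ℂ :=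
  Pi.single i 1 + c y • Pi.single 4 1

lemma fieldDeriv_horizontalField (i : Fin 5) (c f : (Fin 5 → ℂ) → ℂ) (y : Fin 5 → ℂ) :
    fieldDeriv (horizontalField i c) f y = pd i f y + c y * pd 4 f y := by
  simp [fieldDeriv, horizontalField, pd]

lemma V00_eq_fieldDeriv : V00 = fieldDeriv (horizontalField 0 fun y => -y 3) := by
  ext f y
  rw [fieldDeriv_horizontalField, V00, neg_mul, sub_eq_add_neg]

lemma V01_eq_fieldDeriv : V01 = fieldDeriv (horizontalField 2 fun y => y 1) := by
  ext f y
  rw [fieldDeriv_horizontalField, V01]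

lemma V10_eq_fieldDeriv : V10 = fieldDeriv (horizontalField 1 fun y => -y 2) := by
  ext f y
  rw [fieldDeriv_horizontalField, V10, neg_mul, sub_eq_add_neg]

lemma V11_eq_fieldDeriv : V11 = fieldDeriv (horizontalField 3 fun y => y 0) := by
  ext f y
  rw [fieldDeriv_horizontalField, V11]

lemma pd_const_mul_apply (i j : Fin 5) (k : ℂ) (y : Fin 5 → ℂ) :
    pd i (fun q => k * q j) y = k * (Pi.single i 1 : Fin 5 → ℂ) j := by
  have h := ((hasFDerivAt_apply (𝕜 := ℂ) j y).const_mul k).fderiv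
  simp [pd, h]

end HorizontalField

section NullCoord

/-- The function `‖y‖² + ε t`. For `ε = -1` and `ε = 1` these are the two factors of `‖y‖⁴ - t²`. -/
def nullCoord (ε : ℂ) (y : Fin 5 → ℂ) : ℂ :=
  y 0 * y 3 - y 1 * y 2 + ε * y 4

lemma hasFDerivAt_nullCoord (ε : ℂ) (y : Fin 5 → ℂ) :
    HasFDerivAt (nullCoord ε)
      ((y 0 • ContinuousLinearMap.proj 3 + y 3 • ContinuousLinearMap.proj 0) -
        (y 1 • ContinuousLinearMap.proj 2 + y 2 • ContinuousLinearMap.proj 1) +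
        ε • ContinuousLinearMap.proj 4 : (Fin 5 → ℂ) →L[ℂ] ℂ) y :=
  (((hasFDerivAt_apply 0 y).mul (hasFDerivAt_apply 3 y)).sub
    ((hasFDerivAt_apply 1 y).mul (hasFDerivAt_apply 2 y))).add
      ((hasFDerivAt_apply 4 y).const_mul ε)

lemma differentiable_nullCoord (ε : ℂ) : Differentiable ℂ (nullCoord ε) :=
  fun y => (hasFDerivAt_nullCoord ε y).differentiableAt

lemma pd_nullCoord (i : Fin 5) (ε : ℂ) (y : Fin 5 → ℂ) :
    pd i (nullCoord ε) y = ![y 3, -y 2, -y 1, y 0, ε] i := by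
  rw [pd, (hasFDerivAt_nullCoord ε y).fderiv]
  fin_cases i <;> simp

lemma V00_nullCoord (ε : ℂ) : V00 (nullCoord ε) = fun y => (1 - ε) * y 3 := by
  ext y
  simp only [V00, pd_nullCoord, Matrix.cons_val]
  ring

lemma V01_nullCoord (ε : ℂ) : V01 (nullCoord ε) = fun y => (ε - 1) * y 1 := by
  ext y
  simp only [V01, pd_nullCoord, Matrix.cons_val]
  ring

lemma V10_nullCoord (ε : ℂ) : V10 (nullCoord ε) = fun y => -(1 + ε) * y 2 := by
  ext y
  simp only [V10, pd_nullCoord, Matrix.cons_val]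
  ring

lemma V11_nullCoord (ε : ℂ) : V11 (nullCoord ε) = fun y => (1 + ε) * y 0 := by
  ext y
  simp only [V11, pd_nullCoord, Matrix.cons_val]
  ring

lemma V00_V11_nullCoord (ε : ℂ) (y : Fin 5 → ℂ) : V00 (V11 (nullCoord ε)) y = 1 + ε := by
  simp [V11_nullCoord, V00, pd_const_mul_apply]

lemma V10_V01_nullCoord (ε : ℂ) (y : Fin 5 → ℂ) : V10 (V01 (nullCoord ε)) y = ε - 1 := by
  simp [V01_nullCoord, V10, pd_const_mul_apply]

lemma nullCoord_neg_one_mul_nullCoord_one (y : Fin 5 → ℂ) :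
    nullCoord (-1) y * nullCoord 1 y = (y 0 * y 3 - y 1 * y 2) ^ 2 - y 4 ^ 2 := by
  simp only [nullCoord]
  ring

lemma phiH_eq_inv_mul_inv : phiH = fun y => (nullCoord (-1) y)⁻¹ * (nullCoord 1 y)⁻¹ := by
  ext y
  rw [phiH, ← nullCoord_neg_one_mul_nullCoord_one, one_div, mul_inv]

variable {a b : ℂ → ℂ} {p : Fin 5 → ℂ}

lemma V00_V11_comp_nullCoord (ha : AnalyticAt ℂ a (nullCoord (-1) p))
    (hb : AnalyticAt ℂ b (nullCoord 1 p)) :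
    V00 (V11 fun q => a (nullCoord (-1) q) * b (nullCoord 1 q)) p =
      4 * (p 0 * p 3) * (deriv a (nullCoord (-1) p) * deriv b (nullCoord 1 p)) +
        2 * (a (nullCoord (-1) p) * deriv b (nullCoord 1 p)) := by
  have h := fieldDeriv_fieldDeriv_comp_mul_comp
    (X := horizontalField 0 fun y => -y 3) (Y := horizontalField 3 fun y => y 0)
    (ha.eventually_analyticAt.mono fun _ h => h.differentiableAt)
    (hb.eventually_analyticAt.mono fun _ h => h.differentiableAt) hb.deriv.differentiableAt
    (.of_forall (differentiable_nullCoord (-1))) (.of_forall (differentiable_nullCoord 1))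
  simp only [← V00_eq_fieldDeriv, ← V11_eq_fieldDeriv, V00_V11_nullCoord] at h
  rw [h (by rw [V11_nullCoord]; fun_prop) (by simp [V11_nullCoord]) (by simp [V00_nullCoord]),
    V00_nullCoord, V11_nullCoord]
  ring

lemma V10_V01_comp_nullCoord (ha : AnalyticAt ℂ a (nullCoord (-1) p))
    (hb : AnalyticAt ℂ b (nullCoord 1 p)) :
    V10 (V01 fun q => a (nullCoord (-1) q) * b (nullCoord 1 q)) p =
      4 * (p 1 * p 2) * (deriv a (nullCoord (-1) p) * deriv b (nullCoord 1 p)) -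
        2 * (deriv a (nullCoord (-1) p) * b (nullCoord 1 p)) := by
  have h := fieldDeriv_fieldDeriv_comp_mul_comp
    (X := horizontalField 1 fun y => -y 2) (Y := horizontalField 2 fun y => y 1)
    (hb.eventually_analyticAt.mono fun _ h => h.differentiableAt)
    (ha.eventually_analyticAt.mono fun _ h => h.differentiableAt) ha.deriv.differentiableAt
    (.of_forall (differentiable_nullCoord 1)) (.of_forall (differentiable_nullCoord (-1)))
  simp only [← V10_eq_fieldDeriv, ← V01_eq_fieldDeriv, V10_V01_nullCoord] at h
  simp only [mul_comm (a _)]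
  rw [h (by rw [V01_nullCoord]; fun_prop) (by simp [V01_nullCoord]) (by simp [V10_nullCoord]),
    V10_nullCoord, V01_nullCoord]
  ring

theorem subLaplacian_comp_nullCoord (ha : AnalyticAt ℂ a (nullCoord (-1) p))
    (hb : AnalyticAt ℂ b (nullCoord 1 p)) :
    V00 (V11 fun q => a (nullCoord (-1) q) * b (nullCoord 1 q)) p -
        V10 (V01 fun q => a (nullCoord (-1) q) * b (nullCoord 1 q)) p =
      2 * (deriv a (nullCoord (-1) p) * b (nullCoord 1 p) +
        a (nullCoord (-1) p) * deriv b (nullCoord 1 p) +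
        (nullCoord (-1) p + nullCoord 1 p) *
          (deriv a (nullCoord (-1) p) * deriv b (nullCoord 1 p))) := by
  have add_eq : nullCoord (-1) p + nullCoord 1 p = 2 * (p 0 * p 3 - p 1 * p 2) := by
    simp only [nullCoord]
    ring
  rw [V00_V11_comp_nullCoord ha hb, V10_V01_comp_nullCoord ha hb, add_eq]
  ring

end NullCoord

/-- `φ = 1/(‖y‖⁴ − t²)` solves the sub-Laplacian equation
`Δ_bφ = V₀₀′(V₁₁′φ) − V₁₀′(V₀₁′φ) = 0` wherever `‖y‖⁴ ≠ t²`. -/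
theorem phiH_harmonic (p : Fin 5 → ℂ)
    (h : (p 0 * p 3 - p 1 * p 2) ^ 2 ≠ (p 4) ^ 2) :
    V00 (V11 phiH) p - V10 (V01 phiH) p = 0 := by
  have hne : nullCoord (-1) p * nullCoord 1 p ≠ 0 := by
    rw [nullCoord_neg_one_mul_nullCoord_one]
    exact sub_ne_zero.mpr h
  obtain ⟨hu, hw⟩ := mul_ne_zero_iff.mp hne
  rw [phiH_eq_inv_mul_inv, subLaplacian_comp_nullCoord (analyticAt_inv hu) (analyticAt_inv hw),
    deriv_inv, deriv_inv]
  field_simp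
  ring
end

section
/- (Poincaré-type lemma for the partial exterior differentials) Let g₀, g₁ : ℂ⁵ → ℂ be holomorphic (entire). If V₁₀′g₀ = V₀₀′g₁ on ℂ⁵ (i.e. the 1-form g₀θ^{00′} + g₁θ^{10′} is d₀-closed), then there exists a holomorphic function f : ℂ⁵ → ℂ with V₀₀′f = g₀ and V₁₀′f = g₁. Similarly, if V₁₁′g₀ = V₀₁′g₁ on ℂ⁵, then there exists a holomorphic f with V₀₁′f = g₀ and V₁₁′f = g₁. -/
/-!
Both pairs `V00, V10` and `V01, V11` commute, and each pair spans a plane that is constant along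
itself, so its integral leaves are affine planes. Integrating a closed form along straight segments
inside the leaves, starting from the point of the leaf whose leaf coordinates vanish, gives a
primitive on every leaf by the usual Poincaré lemma. That point and the leaf itself depend
holomorphically on the base point, and integrals of holomorphic functions over a compact parameter
interval are holomorphic, so the leafwise primitives fit together to an entire function.
-/

open Metric Set

section ParametricIntegral

variable {E F : Type*} [NormedAddCommGroup E] [NormedSpace ℂ E]
  [NormedAddCommGroup F] [NormedSpace ℂ F]

theorem lipschitzOnWith_ball_of_norm_le {f : E → F} (hf : Differentiable ℂ f) {x : E} {C : ℝ}
    (hC : ∀ z ∈ closedBall x 2, ‖f z‖ ≤ C) :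
    LipschitzOnWith (Real.nnabs (2 * C)) f (ball x 1) := by
  refine (convex_ball x 1).lipschitzOnWith_of_nnnorm_fderiv_le (𝕜 := ℂ) (fun z _ ↦ hf z)
    fun z hz ↦ ?_
  have hball : ball z 1 ⊆ closedBall x 2 :=
    (ball_subset_ball' (by linarith [mem_ball.1 hz])).trans ball_subset_closedBall
  have hmaps : MapsTo f (ball z 1) (closedBall (f z) (2 * C)) := fun w hw ↦ by
    rw [mem_closedBall, dist_eq_norm, two_mul]
    exact (norm_sub_le _ _).trans
      (add_le_add (hC w (hball hw)) (hC z (hball (mem_ball_self one_pos))))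
  have hfderiv : ‖fderiv ℂ f z‖ ≤ 2 * C := by
    simpa using Complex.norm_fderiv_le_div_of_mapsTo_ball hf.differentiableOn hmaps one_pos
  exact_mod_cast hfderiv.trans (le_abs_self _)

theorem differentiable_intervalIntegral_of_continuous [FiniteDimensional ℂ E]
    [FiniteDimensional ℂ F] {f : E → ℝ → F} (hf : Continuous f.uncurry)
    (hdiff : ∀ s, Differentiable ℂ (f · s)) (a b : ℝ) :
    Differentiable ℂ fun x ↦ ∫ s in a..b, f x s := by
  intro x
  have : ProperSpace E := FiniteDimensional.proper ℂ E
  have : CompleteSpace F := FiniteDimensional.complete ℂ F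
  have : ProperSpace (E →L[ℂ] F) := FiniteDimensional.proper ℂ _
  borelize E (E →L[ℂ] F)
  obtain ⟨C, hC⟩ := ((isCompact_closedBall x 2).prod (isCompact_uIcc (a := a) (b := b)))
    |>.exists_bound_of_continuousOn hf.continuousOn
  have hcont (z : E) : Continuous (f z) := hf.comp (Continuous.prodMk_right z)
  have hmeas : Measurable fun s ↦ fderiv ℂ (f · s) x :=
    (measurable_fderiv_with_param ℂ (f := fun s z ↦ f z s) (hf.comp continuous_swap)).comp
      measurable_prodMk_right
  have hlip (s : ℝ) (hs : s ∈ uIoc a b) :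
      LipschitzOnWith (Real.nnabs (2 * C)) (f · s) (ball x 1) :=
    lipschitzOnWith_ball_of_norm_le (hdiff s) fun z hz ↦ hC (z, s) ⟨hz, uIoc_subset_uIcc hs⟩
  exact (intervalIntegral.hasFDerivAt_integral_of_dominated_loc_of_lip (ball_mem_nhds x one_pos)
    (.of_forall fun z ↦ (hcont z).aestronglyMeasurable) ((hcont x).intervalIntegrable a b)
    hmeas.aestronglyMeasurable (.of_forall hlip) intervalIntegrable_const
    (.of_forall fun s _ ↦ (hdiff s x).hasFDerivAt)).2.differentiableAt

end ParametricIntegral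

theorem hasFDerivAt_curveIntegral_segment_of_symmetric {A F : Type*}
    [NormedAddCommGroup A] [NormedSpace ℂ A] [NormedAddCommGroup F] [NormedSpace ℂ F]
    [CompleteSpace F] {ω : A → A →L[ℂ] F} {dω : A → A →L[ℂ] A →L[ℂ] F}
    (hω : ∀ a, HasFDerivAt ω (dω a) a) (hdω : ∀ a u v, dω a u v = dω a v u) (a b : A) :
    HasFDerivAt (∫ᶜ x in .segment a ·, ω x) (ω b) b :=
  (convex_univ.hasFDerivWithinAt_curveIntegral_segment_of_hasFDerivWithinAt_symmetric
    (fun x _ ↦ ((hω x).restrictScalars ℝ).hasFDerivWithinAt)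
    (fun x _ u _ v _ ↦ hdω x u v) (mem_univ a) (mem_univ b)).hasFDerivAt_of_univ

/-- A holomorphic foliation of `E` by affine subspaces modelled on `A`: the leaf through `y` is
`{y + frame y a | a : A}`, the frame is constant along it, and `coord` restricts to a global affine
coordinate on it. The vector field associated with `a : A` is `fun y ↦ frame y a`. -/
structure AffineFoliation (A E : Type*) [NormedAddCommGroup A] [NormedSpace ℂ A]
    [NormedAddCommGroup E] [NormedSpace ℂ E] where
  frame : E → A →L[ℂ] E
  coord : E →L[ℂ] A
  differentiable_frame : Differentiable ℂ frame
  coord_frame : ∀ y a, coord (frame y a) = a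
  frame_add_frame : ∀ y a, frame (y + frame y a) = frame y

namespace AffineFoliation

variable {A E F : Type*} [NormedAddCommGroup A] [NormedSpace ℂ A]
  [NormedAddCommGroup E] [NormedSpace ℂ E] [NormedAddCommGroup F] [NormedSpace ℂ F]
  (L : AffineFoliation A E)

/-- The point with leaf coordinate `a` on the leaf through `y`. -/
def leafPoint (y : E) (a : A) : E :=
  y + L.frame y (a - L.coord y)

@[simp]
theorem leafPoint_coord (y : E) : L.leafPoint y (L.coord y) = y := by
  simp [leafPoint]

theorem frame_leafPoint (y : E) (a : A) : L.frame (L.leafPoint y a) = L.frame y :=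
  L.frame_add_frame y _

theorem coord_add_frame (y : E) (a : A) : L.coord (y + L.frame y a) = L.coord y + a := by
  rw [map_add, L.coord_frame]

theorem leafPoint_add_frame (y : E) (a b : A) :
    L.leafPoint (y + L.frame y a) b = L.leafPoint y b := by
  rw [leafPoint, leafPoint, L.frame_add_frame, L.coord_add_frame, add_assoc, ← map_add]
  congr 2
  abel

theorem hasFDerivAt_leafPoint (y : E) (a : A) : HasFDerivAt (L.leafPoint y) (L.frame y) a :=
  ((L.frame y).hasFDerivAt.comp a ((hasFDerivAt_id a).sub_const (L.coord y))).const_add y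

theorem differentiable_leafPoint_uncurry : Differentiable ℂ L.leafPoint.uncurry := by
  have hframe := L.differentiable_frame
  unfold leafPoint Function.uncurry
  fun_prop

/-- The integral of `ω` along the segment, inside the leaf through `y`, from the point with leaf
coordinate `0` to `y`. A form along the leaves is encoded by its components with respect to the
frame: `ω y a` is its value at `y` on the tangent vector `L.frame y a`. -/
noncomputable def leafPrimitive (ω : E → A →L[ℂ] F) (y : E) : F :=
  ∫ᶜ a in .segment 0 (L.coord y), ω (L.leafPoint y a)

theorem leafPrimitive_add_frame (ω : E → A →L[ℂ] F) (y : E) (a : A) :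
    L.leafPrimitive ω (y + L.frame y a) =
      ∫ᶜ b in .segment 0 (L.coord y + a), ω (L.leafPoint y b) := by
  simp only [leafPrimitive, L.leafPoint_add_frame]
  rw [L.coord_add_frame]

variable {ω : E → A →L[ℂ] F}

theorem differentiable_leafPrimitive [FiniteDimensional ℂ E] [FiniteDimensional ℂ F]
    (hω : Differentiable ℂ ω) : Differentiable ℂ (L.leafPrimitive ω) := by
  have hpoint := L.differentiable_leafPoint_uncurry
  have hpoint_cont := hpoint.continuous
  have hω_cont := hω.continuous
  have hprimitive : L.leafPrimitive ω =
      fun y ↦ ∫ s in (0 : ℝ)..1, ω (L.leafPoint.uncurry (y, s • L.coord y)) (L.coord y) := by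
    ext y
    simp [leafPrimitive, curveIntegral_segment, AffineMap.lineMap_apply]
  rw [hprimitive]
  refine differentiable_intervalIntegral_of_continuous ?_ (fun s ↦ ?_) 0 1
  · exact Continuous.clm_apply (by fun_prop) (by fun_prop)
  · fun_prop

theorem hasFDerivAt_leafPrimitive_leaf [CompleteSpace F] (hω : Differentiable ℂ ω)
    (hclosed : ∀ y a b, fderiv ℂ ω y (L.frame y a) b = fderiv ℂ ω y (L.frame y b) a) (y : E) :
    HasFDerivAt (fun a ↦ L.leafPrimitive ω (y + L.frame y a)) (ω y) 0 := by
  have hderiv (a : A) : HasFDerivAt (fun a ↦ ω (L.leafPoint y a))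
      (fderiv ℂ ω (L.leafPoint y a) ∘L L.frame y) a :=
    (hω _).hasFDerivAt.comp a (L.hasFDerivAt_leafPoint y a)
  have hsymm (a u v : A) : (fderiv ℂ ω (L.leafPoint y a) ∘L L.frame y) u v =
      (fderiv ℂ ω (L.leafPoint y a) ∘L L.frame y) v u := by
    simpa only [ContinuousLinearMap.comp_apply, L.frame_leafPoint]
      using hclosed (L.leafPoint y a) u v
  have hprimitive := hasFDerivAt_curveIntegral_segment_of_symmetric hderiv hsymm 0 (L.coord y)
  rw [leafPoint_coord, ← add_zero (L.coord y)] at hprimitive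
  simpa only [L.leafPrimitive_add_frame] using (hasFDerivAt_comp_add_left (L.coord y)).2 hprimitive

theorem fderiv_leafPrimitive_frame [FiniteDimensional ℂ E] [FiniteDimensional ℂ F]
    (hω : Differentiable ℂ ω)
    (hclosed : ∀ y a b, fderiv ℂ ω y (L.frame y a) b = fderiv ℂ ω y (L.frame y b) a)
    (y : E) (a : A) : fderiv ℂ (L.leafPrimitive ω) y (L.frame y a) = ω y a := by
  have : CompleteSpace F := FiniteDimensional.complete ℂ F
  have hinclusion : HasFDerivAt (fun a ↦ y + L.frame y a) (L.frame y) 0 :=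
    (L.frame y).hasFDerivAt.const_add y
  have hchain := (L.differentiable_leafPrimitive hω _).hasFDerivAt.comp 0 hinclusion
  rw [map_zero, add_zero] at hchain
  exact DFunLike.congr_fun (hchain.unique (L.hasFDerivAt_leafPrimitive_leaf hω hclosed y)) a

open ContinuousLinearMap in
theorem exists_primitive_of_fderiv_eq [FiniteDimensional ℂ E] [FiniteDimensional ℂ F]
    (L : AffineFoliation (ℂ × ℂ) E) {g₀ g₁ : E → F}
    (hg₀ : Differentiable ℂ g₀) (hg₁ : Differentiable ℂ g₁)
    (hclosed : ∀ y, fderiv ℂ g₀ y (L.frame y (0, 1)) = fderiv ℂ g₁ y (L.frame y (1, 0))) :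
    ∃ f : E → F, Differentiable ℂ f ∧ (∀ y, fderiv ℂ f y (L.frame y (1, 0)) = g₀ y) ∧
      ∀ y, fderiv ℂ f y (L.frame y (0, 1)) = g₁ y := by
  let ω (y : E) : ℂ × ℂ →L[ℂ] F :=
    smulRightL ℂ (ℂ × ℂ) F (fst ℂ ℂ ℂ) (g₀ y) + smulRightL ℂ (ℂ × ℂ) F (snd ℂ ℂ ℂ) (g₁ y)
  have hω : Differentiable ℂ ω := by fun_prop
  have hfderiv (y v : E) (b : ℂ × ℂ) :
      fderiv ℂ ω y v b = b.1 • fderiv ℂ g₀ y v + b.2 • fderiv ℂ g₁ y v := by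
    have hderiv :=
      ((smulRightL ℂ (ℂ × ℂ) F (fst ℂ ℂ ℂ)).hasFDerivAt.comp y (hg₀ y).hasFDerivAt).add
        ((smulRightL ℂ (ℂ × ℂ) F (snd ℂ ℂ ℂ)).hasFDerivAt.comp y (hg₁ y).hasFDerivAt)
    exact DFunLike.congr_fun (DFunLike.congr_fun hderiv.fderiv v) b
  have hω_closed (y : E) (a b : ℂ × ℂ) :
      fderiv ℂ ω y (L.frame y a) b = fderiv ℂ ω y (L.frame y b) a := by
    have hframe (c : ℂ × ℂ) :
        L.frame y c = c.1 • L.frame y (1, 0) + c.2 • L.frame y (0, 1) := by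
      simp [← map_smul, ← map_add]
    simp only [hfderiv]
    simp only [hframe a, hframe b, map_add, map_smul, hclosed]
    module
  exact ⟨L.leafPrimitive ω, L.differentiable_leafPrimitive hω,
    fun y ↦ (L.fderiv_leafPrimitive_frame hω hω_closed y (1, 0)).trans (by simp [ω]),
    fun y ↦ (L.fderiv_leafPrimitive_frame hω hω_closed y (0, 1)).trans (by simp [ω])⟩

end AffineFoliation

section Heisenberg

open ContinuousLinearMap

/-- The foliation of `ℂ⁵` by the integral planes of `V00` and `V10`. -/
noncomputable def leaves₀ : AffineFoliation (ℂ × ℂ) (Fin 5 → ℂ) where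
  frame y := (fst ℂ ℂ ℂ).smulRight (Pi.single 0 1 - y 3 • Pi.single 4 1) +
    (snd ℂ ℂ ℂ).smulRight (Pi.single 1 1 - y 2 • Pi.single 4 1)
  coord := (proj 0).prod (proj 1)
  differentiable_frame := by fun_prop
  coord_frame y a := by simp
  frame_add_frame y a := by simp

/-- The foliation of `ℂ⁵` by the integral planes of `V01` and `V11`. -/
noncomputable def leaves₁ : AffineFoliation (ℂ × ℂ) (Fin 5 → ℂ) where
  frame y := (fst ℂ ℂ ℂ).smulRight (Pi.single 2 1 + y 1 • Pi.single 4 1) +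
    (snd ℂ ℂ ℂ).smulRight (Pi.single 3 1 + y 0 • Pi.single 4 1)
  coord := (proj 2).prod (proj 3)
  differentiable_frame := by fun_prop
  coord_frame y a := by simp
  frame_add_frame y a := by simp

variable (f : (Fin 5 → ℂ) → ℂ) (y : Fin 5 → ℂ)

theorem V00_eq_fderiv : V00 f y = fderiv ℂ f y (leaves₀.frame y (1, 0)) := by
  simp [V00, pd, leaves₀]

theorem V10_eq_fderiv : V10 f y = fderiv ℂ f y (leaves₀.frame y (0, 1)) := by
  simp [V10, pd, leaves₀]

theorem V01_eq_fderiv : V01 f y = fderiv ℂ f y (leaves₁.frame y (1, 0)) := by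
  simp [V01, pd, leaves₁]

theorem V11_eq_fderiv : V11 f y = fderiv ℂ f y (leaves₁.frame y (0, 1)) := by
  simp [V11, pd, leaves₁]

end Heisenberg

/-- Poincaré-type lemma for the partial exterior differentials `d₀` and `d₁` on `ℂ⁵`:
a `d₀`-closed (resp. `d₁`-closed) holomorphic 1-form is `d₀`-exact (resp. `d₁`-exact). -/
theorem partial_poincare_lemma (g0 g1 : (Fin 5 → ℂ) → ℂ)
    (hg0 : Differentiable ℂ g0) (hg1 : Differentiable ℂ g1) :
    ((∀ y, V10 g0 y = V00 g1 y) →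
      ∃ f : (Fin 5 → ℂ) → ℂ, Differentiable ℂ f ∧
        (∀ y, V00 f y = g0 y) ∧ (∀ y, V10 f y = g1 y)) ∧
    ((∀ y, V11 g0 y = V01 g1 y) →
      ∃ f : (Fin 5 → ℂ) → ℂ, Differentiable ℂ f ∧
        (∀ y, V01 f y = g0 y) ∧ (∀ y, V11 f y = g1 y)) := by
  simp only [V00_eq_fderiv, V10_eq_fderiv, V01_eq_fderiv, V11_eq_fderiv]
  exact ⟨leaves₀.exists_primitive_of_fderiv_eq hg0 hg1,
    leaves₁.exists_primitive_of_fderiv_eq hg0 hg1⟩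
end

section
/- Let x = (x₁, x₂, x₃, x₄, s₁) and y = (y₁, y₂, y₃, y₄, s₂) be points of ℝ⁵, embedded into ℂ⁵ by x₀₀′ = x₁ + ix₂, x₁₀′ = x₃ + ix₄, x₀₁′ = −x₃ + ix₄, x₁₁′ = x₁ − ix₂, t = −is₁ (and similarly for y with t = −is₂). If there exists ζ ∈ ℂ such that x₀₀′ + ζx₀₁′ = y₀₀′ + ζy₀₁′, x₁₀′ + ζx₁₁′ = y₁₀′ + ζy₁₁′, and −is₁ − (x₀₀′x₁₁′ + x₁₀′x₀₁′ + 2ζ x₀₁′x₁₁′) = −is₂ − (y₀₀′y₁₁′ + y₁₀′y₀₁′ + 2ζ y₀₁′y₁₁′), then x = y (all five real coordinates agree). Consequently the projective lines x̂ = η∘τ⁻¹(x) and ŷ = η∘τ⁻¹(y) over distinct real points are disjoint, so the real twistor fibration is a trivial ℂP¹-bundle over ℝ⁵. -/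
open Complex

/-- The embedding `ℝ⁵ ↪ ℂ⁵` of the real Heisenberg group:
`x₀₀′ = x₁ + ix₂`, `x₁₀′ = x₃ + ix₄`, `x₀₁′ = −x₃ + ix₄`, `x₁₁′ = x₁ − ix₂`. -/
noncomputable def c00 (x1 x2 : ℝ) : ℂ := (x1 : ℂ) + I * x2
noncomputable def c10 (x3 x4 : ℝ) : ℂ := (x3 : ℂ) + I * x4
noncomputable def c01 (x3 x4 : ℝ) : ℂ := -(x3 : ℂ) + I * x4
noncomputable def c11 (x1 x2 : ℝ) : ℂ := (x1 : ℂ) - I * x2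

/-!
On the real slice `y₁₁′ = star y₀₀′` and `y₀₁′ = -star y₁₀′`, so for fixed `ζ` the first two
components of `η` (the incidence relations) are the additive maps `a - ζ * star b` and
`b + ζ * star a` of `(a, b) = (y₀₀′, y₁₀′)`. Pairing them with `(star a, star b)` cancels `ζ` and
leaves `star a * a + star b * b`, which vanishes only at the origin. Hence `ζ` and the first two
components determine `a` and `b`, and the third component then determines `t`.
-/

theorem star_mul_self_add_star_mul_self_eq_zero {R : Type*} [NonUnitalSemiring R] [NoZeroDivisors R]
    [PartialOrder R] [StarRing R] [StarOrderedRing R] {a b : R} :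
    star a * a + star b * b = 0 ↔ a = 0 ∧ b = 0 := by
  rw [add_eq_zero_iff_of_nonneg (star_mul_self_nonneg a) (star_mul_self_nonneg b)]
  simp only [mul_eq_zero, star_eq_zero, or_self]

section TwistorProjection

/-- The twistor projection `η` of the complex Heisenberg group in the finite chart, over a
commutative ring in place of `ℂ`. Note the argument order: `y₁₀′` comes before `y₀₁′`. -/
def twistorProjection {R : Type*} [CommRing R] (y₀₀ y₁₀ y₀₁ y₁₁ t ζ : R) : R × R × R × R :=
  (y₀₀ + ζ * y₀₁, y₁₀ + ζ * y₁₁, t - (y₀₀ * y₁₁ + y₁₀ * y₀₁ + 2 * ζ * y₀₁ * y₁₁), ζ)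

theorem star_mul_incidence_add_star_mul_incidence {R : Type*} [CommRing R] [Star R] (a b ζ : R) :
    star a * (a + ζ * -star b) + star b * (b + ζ * star a) = star a * a + star b * b := by
  ring

variable {R : Type*} [CommRing R] [NoZeroDivisors R] [PartialOrder R] [StarRing R]
  [StarOrderedRing R]

theorem eq_zero_of_incidence_eq_zero {a b ζ : R} (h₀ : a + ζ * -star b = 0)
    (h₁ : b + ζ * star a = 0) : a = 0 ∧ b = 0 := by
  rw [← star_mul_self_add_star_mul_self_eq_zero,
    ← star_mul_incidence_add_star_mul_incidence a b ζ, h₀, h₁, mul_zero, mul_zero, add_zero]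

theorem eq_of_incidence_eq {a b a' b' ζ : R} (h₀ : a + ζ * -star b = a' + ζ * -star b')
    (h₁ : b + ζ * star a = b' + ζ * star a') : a = a' ∧ b = b' := by
  have h₀_sub : (a - a') + ζ * -star (b - b') = 0 := by
    rw [star_sub]
    linear_combination h₀
  have h₁_sub : (b - b') + ζ * star (a - a') = 0 := by
    rw [star_sub]
    linear_combination h₁
  simpa only [sub_eq_zero] using eq_zero_of_incidence_eq_zero h₀_sub h₁_sub

theorem real_twistor_lines_disjoint_general {a b t ζ a' b' t' ζ' : R}
    (h : twistorProjection a b (-star b) (star a) t ζ =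
      twistorProjection a' b' (-star b') (star a') t' ζ') :
    a = a' ∧ b = b' ∧ t = t' ∧ ζ = ζ' := by
  simp only [twistorProjection, Prod.mk.injEq] at h
  obtain ⟨h₀, h₁, ht, rfl⟩ := h
  obtain ⟨rfl, rfl⟩ := eq_of_incidence_eq h₀ h₁
  exact ⟨rfl, rfl, sub_left_injective ht, rfl⟩

end TwistorProjection

theorem c11_eq_star_c00 (x1 x2 : ℝ) : c11 x1 x2 = star (c00 x1 x2) := by
  simp [c11, c00, sub_eq_add_neg]

theorem c01_eq_neg_star_c10 (x3 x4 : ℝ) : c01 x3 x4 = -star (c10 x3 x4) := by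
  simp [c01, c10, add_comm]

theorem c00_inj {x1 x2 y1 y2 : ℝ} : c00 x1 x2 = c00 y1 y2 ↔ x1 = y1 ∧ x2 = y2 := by
  simp [c00, Complex.ext_iff]

theorem c10_inj {x3 x4 y3 y4 : ℝ} : c10 x3 x4 = c10 y3 y4 ↔ x3 = y3 ∧ x4 = y4 :=
  c00_inj

/-- If the twistor lines `x̂` and `ŷ` of two real points of the 5D real Heisenberg group
meet (in the finite chart), then the points coincide. Hence the real twistor fibration is a
trivial `ℂP¹`-bundle over `ℝ⁵`. -/
theorem real_twistor_lines_disjoint (x1 x2 x3 x4 s1 y1 y2 y3 y4 s2 : ℝ)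
    (h : ∃ ζ : ℂ,
      c00 x1 x2 + ζ * c01 x3 x4 = c00 y1 y2 + ζ * c01 y3 y4 ∧
      c10 x3 x4 + ζ * c11 x1 x2 = c10 y3 y4 + ζ * c11 y1 y2 ∧
      -I * s1 - (c00 x1 x2 * c11 x1 x2 + c10 x3 x4 * c01 x3 x4
                  + 2 * ζ * c01 x3 x4 * c11 x1 x2)
        = -I * s2 - (c00 y1 y2 * c11 y1 y2 + c10 y3 y4 * c01 y3 y4
                  + 2 * ζ * c01 y3 y4 * c11 y1 y2)) :
    x1 = y1 ∧ x2 = y2 ∧ x3 = y3 ∧ x4 = y4 ∧ s1 = s2 := by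
  obtain ⟨ζ, h₀, h₁, ht⟩ := h
  simp only [c11_eq_star_c00, c01_eq_neg_star_c10] at h₀ h₁ ht
  open scoped ComplexOrder in
  simpa [c00_inj, c10_inj, and_assoc] using real_twistor_lines_disjoint_general
    (Prod.ext h₀ (Prod.ext h₁ (Prod.ext ht (Eq.refl ζ))))
end
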